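/- arXiv:1406.4269 — 3 statements merged into one kernel-verified Lean document; each statement's English description precedes it below -/
import Mathlib

section
/- Let g ≥ 1 be an integer, N a positive even integer, Π a symmetric g×g complex matrix whose imaginary part Π_I is positive definite, and μ ∈ ℤ^g. Then the theta series θ_μ^Π : ℂ^g → ℂ is holomorphic, i.e., complex differentiable at every point of ℂ^g. -/
open scoped BigOperators

/-- The term of index `n ∈ ℤ^g` in the theta series `θ_μ^Π`:
`exp(2πiN[ (1/2)(μ/N+n)ᵀ Π (μ/N+n) + (μ/N+n)ᵀ z ])`. -/
noncomputable def thetaTerm (g N : ℕ) (P : Matrix (Fin g) (Fin g) ℂ) (μ : Fin g → ℤ)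
    (z : Fin g → ℂ) (n : Fin g → ℤ) : ℂ :=
  Complex.exp (2 * Real.pi * Complex.I * N *
    ((1 / 2) * ∑ j, ∑ k, ((μ j : ℂ) / N + (n j : ℂ)) * P j k * ((μ k : ℂ) / N + (n k : ℂ))
      + ∑ j, ((μ j : ℂ) / N + (n j : ℂ)) * z j))

/-- The theta series `θ_μ^Π(z) = Σ_{n ∈ ℤ^g} exp(2πiN[(1/2)(μ/N+n)ᵀΠ(μ/N+n) + (μ/N+n)ᵀz])`. -/
noncomputable def theta (g N : ℕ) (P : Matrix (Fin g) (Fin g) ℂ) (μ : Fin g → ℤ)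
    (z : Fin g → ℂ) : ℂ :=
  ∑' n : Fin g → ℤ, thetaTerm g N P μ z n

/-!
Up to rescaling `Π` and `z` by `N`, the series is Riemann's theta function of period matrix
`Ω = NΠ`, a series `∑ a_x exp (L_x z)` over a translated lattice with `L_x` linear in `z`. On the
ball of radius `R`, the term and its derivative are bounded by `|a_x| exp ((R + 1) ‖L_x‖)`. Since
`|a_x| = exp (-π xᵀ(Im Ω)x) ≤ exp (-π c ‖x‖²)` for some `c > 0` and `‖L_x‖ = O(‖x‖)`, these bounds
decay faster than any power of `‖x‖`, hence are summable, and the series may be differentiated term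
by term.
-/

open Filter Matrix
open Complex (I)

section ExponentialSeries

variable {E : Type*} [NormedAddCommGroup E] [NormedSpace ℂ E]

lemma norm_cexp_clm_le (L : E →L[ℂ] ℂ) {z : E} {R : ℝ} (hz : ‖z‖ ≤ R) :
    ‖Complex.exp (L z)‖ ≤ Real.exp (R * ‖L‖) := by
  refine (Complex.norm_exp_le_exp_norm _).trans (Real.exp_le_exp.mpr ?_)
  rw [mul_comm]
  exact L.le_opNorm_of_le hz

lemma hasFDerivAt_const_mul_cexp_clm (a : ℂ) (L : E →L[ℂ] ℂ) (z : E) :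
    HasFDerivAt (fun w => a * Complex.exp (L w)) (a • Complex.exp (L z) • L) z :=
  L.hasFDerivAt.cexp.const_mul a

-- The factor `‖L‖` produced by differentiation is absorbed by enlarging the radius by one.
lemma norm_smul_cexp_clm_smul_le (a : ℂ) (L : E →L[ℂ] ℂ) {z : E} {R : ℝ} (hz : ‖z‖ ≤ R) :
    ‖a • Complex.exp (L z) • L‖ ≤ ‖a‖ * Real.exp ((R + 1) * ‖L‖) := by
  have hL : ‖L‖ ≤ Real.exp ‖L‖ := by linarith [Real.add_one_le_exp ‖L‖]
  rw [norm_smul, norm_smul, add_one_mul, Real.exp_add]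
  gcongr
  exact norm_cexp_clm_le L hz

theorem differentiable_tsum_const_mul_cexp_clm {α : Type*} {a : α → ℂ} {L : α → E →L[ℂ] ℂ}
    (h : ∀ R : ℝ, 0 ≤ R → Summable fun i => ‖a i‖ * Real.exp (R * ‖L i‖)) :
    Differentiable ℂ fun z => ∑' i, a i * Complex.exp (L i z) := by
  intro z₀
  have hz₀ : z₀ ∈ Metric.ball 0 (‖z₀‖ + 1) := by simp
  have hsum : Summable fun i => a i * Complex.exp (L i z₀) := by
    refine .of_norm_bounded (h ‖z₀‖ (norm_nonneg _)) fun i => ?_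
    rw [norm_mul]
    gcongr
    exact norm_cexp_clm_le _ le_rfl
  let : NormedSpace ℝ E := NormedSpace.restrictScalars ℝ ℂ E
  exact (hasFDerivAt_tsum_of_isPreconnected (h (‖z₀‖ + 1 + 1) (by positivity)) Metric.isOpen_ball
    (convex_ball _ _).isPreconnected
    (fun i z _ => hasFDerivAt_const_mul_cexp_clm (a i) (L i) z)
    (fun i z hz => norm_smul_cexp_clm_smul_le _ _ (mem_ball_zero_iff.mp hz).le)
    hz₀ hsum hz₀).differentiableAt

end ExponentialSeries

section GaussianSummability

lemma summable_exp_neg_quadratic_norm_sub {E : Type*} [NormedAddCommGroup E] [NormedSpace ℝ E]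
    [FiniteDimensional ℝ E] (L : Submodule ℤ E) [DiscreteTopology L] {α : ℝ} (hα : α < 0) (β : ℝ)
    (a : E) : Summable fun v : L => Real.exp (α * ‖v - a‖ ^ 2 + β * ‖v - a‖) := by
  have : ProperSpace E := FiniteDimensional.proper ℝ E
  have htendsto : Tendsto (fun v : L => ‖v - a‖) cofinite atTop :=
    tendsto_norm_cocompact_atTop.comp <| (Homeomorph.subRight a).isClosedEmbedding.tendsto_cocompact
      |>.comp <| L.toAddSubgroup.tendsto_coe_cofinite_of_discrete
        (isDiscrete_iff_discreteTopology.mpr ‹_›)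
  exact summable_of_isBigO
    (ZLattice.summable_norm_sub_rpow L (-Module.finrank ℤ L - 1) (sub_one_lt _) a)
    ((rexp_neg_quadratic_isLittleO_rpow_atTop hα β _).comp_tendsto htendsto).isBigO

variable {ι : Type*} [Fintype ι]

lemma summable_exp_neg_quadratic_norm_add_intCast {α : ℝ} (hα : α < 0) (β : ℝ) (a : ι → ℝ) :
    Summable fun n : ι → ℤ =>
      Real.exp (α * ‖a + Int.cast ∘ n‖ ^ 2 + β * ‖a + Int.cast ∘ n‖) := by
  let b := Pi.basisFun ℝ ι
  have hmem (n : ι → ℤ) : (Int.cast ∘ n : ι → ℝ) ∈ Submodule.span ℤ (Set.range b) :=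
    (b.mem_span_iff_repr_mem ℤ _).mpr fun i => ⟨n i, by simp [b]⟩
  have hinj : Function.Injective fun n : ι → ℤ => (⟨_, hmem n⟩ : Submodule.span ℤ (Set.range b)) :=
    fun m n hmn => Int.cast_injective.comp_left (congrArg Subtype.val hmn)
  simpa only [Function.comp_def, sub_neg_eq_add, add_comm] using
    (summable_exp_neg_quadratic_norm_sub (Submodule.span ℤ (Set.range b)) hα β (-a)).comp_injective
      hinj

end GaussianSummability

section Coercivity

lemma exists_pos_mul_norm_sq_le {E : Type*} [NormedAddCommGroup E] [NormedSpace ℝ E]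
    [ProperSpace E] {f : E → ℝ} (hf : Continuous f) (hsmul : ∀ (r : ℝ) x, f (r • x) = r ^ 2 * f x)
    (hpos : ∀ x ≠ 0, 0 < f x) : ∃ c > 0, ∀ x, c * ‖x‖ ^ 2 ≤ f x := by
  obtain ⟨c, hc, hmin⟩ := (isCompact_sphere (0 : E) 1).exists_forall_le' hf.continuousOn
    fun x hx => hpos x (ne_zero_of_mem_unit_sphere ⟨x, hx⟩)
  refine ⟨c, hc, fun x => ?_⟩
  obtain rfl | hx := eq_or_ne x 0
  · simpa using (hsmul 0 0).ge
  calc c * ‖x‖ ^ 2 ≤ f (‖x‖⁻¹ • x) * ‖x‖ ^ 2 := by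
        gcongr
        exact hmin _ (by simp [norm_smul, hx])
    _ = f x := by
        rw [hsmul]
        field_simp

lemma exists_pos_mul_norm_sq_le_dotProduct_mulVec {ι : Type*} [Fintype ι] {A : Matrix ι ι ℝ}
    (hA : A.PosDef) : ∃ c > 0, ∀ x : ι → ℝ, c * ‖x‖ ^ 2 ≤ x ⬝ᵥ A *ᵥ x := by
  refine exists_pos_mul_norm_sq_le (by fun_prop) (fun r x => ?_) fun x hx => ?_
  · simp only [mulVec_smul, smul_dotProduct, dotProduct_smul, smul_eq_mul]
    ring
  · simpa using hA.dotProduct_mulVec_pos hx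

end Coercivity

section RiemannTheta

variable {ι : Type*} [Fintype ι]

/-- The linear form `z ↦ 2πi xᵀz` on `ℂ^ι` attached to a real vector `x`; its exponential is the
`z`-dependent factor of a term of the Riemann theta series. -/
noncomputable def thetaPhase (x : ι → ℝ) : (ι → ℂ) →L[ℂ] ℂ :=
  (2 * Real.pi * I) • ∑ j, (x j : ℂ) • ContinuousLinearMap.proj j

/-- The value `exp(πi xᵀΩx)` at the real vector `x` of the Gaussian with matrix `Ω`; it is the
coefficient of `exp(2πi xᵀz)` in the Riemann theta series. -/
noncomputable def thetaCoeff (Ω : Matrix ι ι ℂ) (x : ι → ℝ) : ℂ :=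
  Complex.exp (Real.pi * I * ((Complex.ofReal ∘ x) ⬝ᵥ Ω *ᵥ (Complex.ofReal ∘ x)))

/-- Riemann's theta function with period matrix `Ω` and characteristics `(a, 0)`: the sum of
`exp(πi xᵀΩx + 2πi xᵀz)` over the points `x = a + n` of the translated lattice `a + ℤ^ι`. -/
noncomputable def riemannTheta (a : ι → ℝ) (Ω : Matrix ι ι ℂ) (z : ι → ℂ) : ℂ :=
  ∑' n : ι → ℤ,
    thetaCoeff Ω (a + Int.cast ∘ n : ι → ℝ) * Complex.exp (thetaPhase (a + Int.cast ∘ n : ι → ℝ) z)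

lemma thetaPhase_apply (x : ι → ℝ) (z : ι → ℂ) :
    thetaPhase x z = 2 * Real.pi * I * ∑ j, (x j : ℂ) * z j := by
  simp [thetaPhase]

lemma norm_thetaPhase_le (x : ι → ℝ) : ‖thetaPhase x‖ ≤ 2 * Real.pi * Fintype.card ι * ‖x‖ := by
  refine ContinuousLinearMap.opNorm_le_bound _ (by positivity) fun z => ?_
  have hsum : ‖∑ j, (x j : ℂ) * z j‖ ≤ Fintype.card ι * (‖x‖ * ‖z‖) := by
    rw [← nsmul_eq_mul]
    refine (norm_sum_le _ _).trans (Finset.sum_le_card_nsmul _ _ _ fun j _ => ?_)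
    rw [norm_mul, Complex.norm_real]
    gcongr <;> exact norm_le_pi_norm _ j
  calc ‖thetaPhase x z‖ = 2 * Real.pi * ‖∑ j, (x j : ℂ) * z j‖ := by
        simp [thetaPhase_apply, abs_of_pos Real.pi_pos]
    _ ≤ 2 * Real.pi * (Fintype.card ι * (‖x‖ * ‖z‖)) := by gcongr
    _ = 2 * Real.pi * Fintype.card ι * ‖x‖ * ‖z‖ := by ring

lemma im_ofReal_dotProduct_mulVec (Ω : Matrix ι ι ℂ) (x : ι → ℝ) :
    ((Complex.ofReal ∘ x) ⬝ᵥ Ω *ᵥ (Complex.ofReal ∘ x)).im = x ⬝ᵥ Ω.map Complex.im *ᵥ x := by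
  simp [dotProduct, mulVec]

lemma norm_thetaCoeff (Ω : Matrix ι ι ℂ) (x : ι → ℝ) :
    ‖thetaCoeff Ω x‖ = Real.exp (-(Real.pi * (x ⬝ᵥ Ω.map Complex.im *ᵥ x))) := by
  rw [thetaCoeff, Complex.norm_exp, mul_assoc, Complex.re_ofReal_mul, Complex.I_mul_re,
    im_ofReal_dotProduct_mulVec, mul_neg]

lemma summable_norm_thetaCoeff_mul_exp (a : ι → ℝ) {Ω : Matrix ι ι ℂ}
    (hΩ : (Ω.map Complex.im).PosDef) {R : ℝ} (hR : 0 ≤ R) :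
    Summable fun n : ι → ℤ => ‖thetaCoeff Ω (a + Int.cast ∘ n : ι → ℝ)‖ *
      Real.exp (R * ‖thetaPhase (a + Int.cast ∘ n : ι → ℝ)‖) := by
  obtain ⟨c, hc, hcoercive⟩ := exists_pos_mul_norm_sq_le_dotProduct_mulVec hΩ
  have hα : -(Real.pi * c) < 0 := neg_neg_of_pos (by positivity)
  refine .of_nonneg_of_le (fun n => by positivity) (fun n => ?_)
    (summable_exp_neg_quadratic_norm_add_intCast hα (R * (2 * Real.pi * Fintype.card ι)) a)
  rw [norm_thetaCoeff, ← Real.exp_add, neg_mul, mul_assoc Real.pi, mul_assoc R]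
  gcongr
  · exact hcoercive _
  · exact norm_thetaPhase_le _

theorem differentiable_riemannTheta (a : ι → ℝ) {Ω : Matrix ι ι ℂ}
    (hΩ : (Ω.map Complex.im).PosDef) : Differentiable ℂ (riemannTheta a Ω) :=
  differentiable_tsum_const_mul_cexp_clm fun _ hR => summable_norm_thetaCoeff_mul_exp a hΩ hR

end RiemannTheta

lemma theta_eq_riemannTheta (g N : ℕ) (P : Matrix (Fin g) (Fin g) ℂ) (μ : Fin g → ℤ)
    (z : Fin g → ℂ) :
    theta g N P μ z = riemannTheta (fun j => (μ j : ℝ) / N) ((N : ℝ) • P) ((N : ℂ) • z) := by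
  refine tsum_congr fun n => ?_
  set x : Fin g → ℝ := (fun j => (μ j : ℝ) / N) + Int.cast ∘ n with hx_def
  have hx (j : Fin g) : (μ j : ℂ) / N + n j = x j := by simp [hx_def]
  have hquadratic : (Complex.ofReal ∘ x) ⬝ᵥ ((N : ℝ) • P) *ᵥ (Complex.ofReal ∘ x) =
      N * ∑ j, ∑ k, (x j : ℂ) * P j k * x k := by
    rw [smul_mulVec, dotProduct_smul, Complex.real_smul, Complex.ofReal_natCast]
    simp only [dotProduct, mulVec, Finset.mul_sum, Function.comp_apply, mul_assoc]
  have hlinear : ∑ j, (x j : ℂ) * ((N : ℂ) • z) j = N * ∑ j, (x j : ℂ) * z j := by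
    rw [Finset.mul_sum]
    exact Finset.sum_congr rfl fun j _ => mul_left_comm _ _ _
  simp only [thetaTerm, thetaCoeff, thetaPhase_apply, ← Complex.exp_add, hx, hquadratic, hlinear]
  ring_nf

theorem theta_holomorphic_general (g N : ℕ) (hN0 : 0 < N) (P : Matrix (Fin g) (Fin g) ℂ)
    (hpos : (P.map Complex.im).PosDef) (μ : Fin g → ℤ) :
    Differentiable ℂ (theta g N P μ) := by
  have hNP : (((N : ℝ) • P).map Complex.im).PosDef := by
    have himag : ((N : ℝ) • P).map Complex.im = (N : ℝ) • P.map Complex.im := by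
      ext j k
      simp
    rw [himag]
    exact hpos.smul (Nat.cast_pos.mpr hN0)
  rw [funext (theta_eq_riemannTheta g N P μ)]
  exact (differentiable_riemannTheta _ hNP).comp (differentiable_id.const_smul (N : ℂ))

/-- The theta series `θ_μ^Π : ℂ^g → ℂ` is holomorphic, i.e. complex differentiable at
every point. -/
theorem theta_holomorphic (g N : ℕ) (hg : 1 ≤ g) (hN0 : 0 < N) (hN : Even N)
    (P : Matrix (Fin g) (Fin g) ℂ) (hsym : P.IsSymm)
    (hpos : (P.map Complex.im).PosDef) (μ : Fin g → ℤ) :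
    Differentiable ℂ (theta g N P μ) :=
  theta_holomorphic_general g N hN0 P hpos μ
end

section
/- Let g ≥ 1 be an integer, N a positive even integer, and Π a symmetric g×g complex matrix whose imaginary part Π_I is positive definite. Then the family of functions {θ_μ^Π : μ ∈ {0,1,…,N−1}^g} is linearly independent over ℂ in the space of functions ℂ^g → ℂ. -/
open scoped BigOperators

/-! Restricted to `z = x ∈ ℝ^g`, `θ_μ^Π` is an absolutely convergent Fourier series on the torus
`ℝ^g / ℤ^g`: it has frequencies `μ + N n` and nonzero coefficients `thetaTerm g N Π μ 0 n`, which
decay like a Gaussian because `Π_I` is positive definite. For incongruent `μ` modulo `N` the sets of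
frequencies are disjoint, so the Fourier coefficient at the frequency `μ` sees only `θ_μ^Π`. -/

section GaussianSums

open Matrix
open scoped MatrixOrder

lemma summable_prod_pi {ι : Type*} [Fintype ι] {κ : ι → Type*} {f : ∀ i, κ i → ℝ}
    (hf₀ : ∀ i k, 0 ≤ f i k) (hf : ∀ i, Summable (f i)) :
    Summable fun x : ∀ i, κ i => ∏ i, f i (x i) := by
  classical
  have hprod : ∀ x : ∀ i, κ i, 0 ≤ ∏ i, f i (x i) := fun x =>
    Finset.prod_nonneg fun i _ => hf₀ i (x i)
  refine summable_of_sum_le (c := ∏ i, ∑' k, f i k) hprod fun s => ?_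
  calc ∑ x ∈ s, ∏ i, f i (x i)
      ≤ ∑ x ∈ Fintype.piFinset fun i => s.image (· i), ∏ i, f i (x i) :=
        Finset.sum_le_sum_of_subset_of_nonneg
          (fun x hx => Fintype.mem_piFinset.2 fun i => Finset.mem_image_of_mem _ hx)
          fun x _ _ => hprod x
    _ = ∏ i, ∑ k ∈ s.image (· i), f i k := (Finset.prod_univ_sum _ _).symm
    _ ≤ ∏ i, ∑' k, f i k :=
        Finset.prod_le_prod (fun i _ => Finset.sum_nonneg fun k _ => hf₀ i k)
          fun i _ => (hf i).sum_le_tsum _ fun k _ => hf₀ i k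

variable {d : Type*} [Fintype d]

lemma exists_pos_mul_dotProduct_self_le_of_posDef {A : Matrix d d ℝ} (hA : A.PosDef) :
    ∃ c : ℝ, 0 < c ∧ ∀ v : d → ℝ, c * (v ⬝ᵥ v) ≤ v ⬝ᵥ A *ᵥ v := by
  classical
  cases isEmpty_or_nonempty d
  · exact ⟨1, one_pos, fun v => by simp⟩
  obtain ⟨c, hc, hcA⟩ := (CFC.exists_pos_algebraMap_le_iff hA.isHermitian).2
    fun x hx => hA.isStrictlyPositive.spectrum_pos hx
  refine ⟨c, hc, fun v => ?_⟩
  have hv := (Matrix.le_iff.1 hcA).dotProduct_mulVec_nonneg v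
  simpa [Algebra.algebraMap_eq_smul_one, sub_mulVec, smul_mulVec] using hv

lemma summable_exp_neg_dotProduct_mulVec {A : Matrix d d ℝ} (hA : A.PosDef) (a : d → ℝ) :
    Summable fun n : d → ℤ =>
      Real.exp (-((fun j => a j + n j) ⬝ᵥ A *ᵥ fun j => a j + n j)) := by
  obtain ⟨c, hc, hcA⟩ := exists_pos_mul_dotProduct_self_le_of_posDef hA
  have gaussian (j : d) : Summable fun k : ℤ => Real.exp (-(c * (a j + k) ^ 2)) := by
    refine (HurwitzZeta.hasSum_int_evenKernel (a j) (div_pos hc Real.pi_pos)).summable.congr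
      fun k => congrArg Real.exp ?_
    field_simp
    ring
  refine (summable_prod_pi (fun _ _ => (Real.exp_pos _).le) gaussian).of_nonneg_of_le
    (fun _ => (Real.exp_pos _).le) fun n => ?_
  rw [← Real.exp_sum, Real.exp_le_exp, Finset.sum_neg_distrib, ← Finset.mul_sum, neg_le_neg_iff]
  simpa only [dotProduct, ← pow_two] using hcA fun j => a j + n j

end GaussianSums

section Torus

open MeasureTheory UnitAddTorus

variable {d : Type*} [Fintype d]

-- Mathlib normalises the measure on `ℝ / ℤ` for `mFourierLp` by the same instances, but locally.
noncomputable local instance : MeasureSpace UnitAddCircle := ⟨AddCircle.haarAddCircle⟩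

local instance : IsProbabilityMeasure (volume : Measure UnitAddCircle) :=
  inferInstanceAs (IsProbabilityMeasure AddCircle.haarAddCircle)

/-- The Fourier coefficient `UnitAddTorus.mFourierCoeff` of frequency `m`, as a continuous linear
functional on `C(UnitAddTorus d, ℂ)`; it is written as an `L²` inner product so that continuity and
orthogonality come from `UnitAddTorus.mFourierLp`. -/
noncomputable def mFourierCoeffCLM (m : d → ℤ) : C(UnitAddTorus d, ℂ) →L[ℂ] ℂ :=
  innerSL ℂ (mFourierLp 2 m) ∘L ContinuousMap.toLp 2 volume ℂ

lemma mFourierCoeffCLM_mFourier (m n : d → ℤ) :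
    mFourierCoeffCLM m (mFourier n) = if m = n then 1 else 0 :=
  orthonormal_iff_ite.1 orthonormal_mFourier m n

lemma summable_smul_mFourier {κ : Type*} {a : κ → ℂ} (ha : Summable fun k => ‖a k‖)
    (e : κ → d → ℤ) : Summable fun k => a k • mFourier (e k) :=
  .of_norm <| by simpa only [norm_smul, mFourier_norm, mul_one] using ha

lemma mFourierCoeffCLM_tsum_smul_mFourier {κ : Type*} {a : κ → ℂ}
    (ha : Summable fun k => ‖a k‖) (e : κ → d → ℤ) (m : d → ℤ) :
    mFourierCoeffCLM m (∑' k, a k • mFourier (e k)) = ∑' k, if m = e k then a k else 0 := by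
  simp only [ContinuousLinearMap.map_tsum _ (summable_smul_mFourier ha e), map_smul,
    mFourierCoeffCLM_mFourier, smul_eq_mul, mul_ite, mul_one, mul_zero]

lemma mFourier_coe (n : d → ℤ) (x : d → ℝ) :
    mFourier n (fun j => (x j : UnitAddCircle)) =
      Complex.exp (2 * Real.pi * Complex.I * ∑ j, (n j : ℂ) * x j) := by
  simp only [mFourier, ContinuousMap.coe_mk, fourier_coe_apply, ← Complex.exp_sum,
    Complex.ofReal_one, div_one, Finset.mul_sum, mul_assoc]

end Torus

section Theta

open Matrix UnitAddTorus

lemma im_dotProduct_mulVec_ofReal {d : Type*} [Fintype d] (P : Matrix d d ℂ) (v w : d → ℝ) :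
    ((fun j => (v j : ℂ)) ⬝ᵥ P *ᵥ fun j => (w j : ℂ)).im = v ⬝ᵥ P.map Complex.im *ᵥ w := by
  simp [dotProduct, mulVec]

variable {g N : ℕ} {P : Matrix (Fin g) (Fin g) ℂ}

lemma thetaTerm_ne_zero (μ : Fin g → ℤ) (z : Fin g → ℂ) (n : Fin g → ℤ) :
    thetaTerm g N P μ z n ≠ 0 :=
  Complex.exp_ne_zero _

lemma norm_thetaTerm_zero (μ n : Fin g → ℤ) :
    ‖thetaTerm g N P μ 0 n‖ = Real.exp (-((fun j => (μ j : ℝ) / N + n j) ⬝ᵥ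
      ((Real.pi * N) • P.map Complex.im) *ᵥ fun j => (μ j : ℝ) / N + n j)) := by
  set v : Fin g → ℝ := fun j => (μ j : ℝ) / N + n j with hv
  have quadratic : ∑ j, ∑ k, ((μ j : ℂ) / N + n j) * P j k * ((μ k : ℂ) / N + n k) =
      (fun j => (v j : ℂ)) ⬝ᵥ P *ᵥ fun j => (v j : ℂ) := by
    simp [hv, dotProduct, mulVec, Finset.mul_sum, mul_assoc]
  have exponent : thetaTerm g N P μ 0 n = Complex.exp (((Real.pi * N : ℝ) : ℂ) *
      (Complex.I * ((fun j => (v j : ℂ)) ⬝ᵥ P *ᵥ fun j => (v j : ℂ)))) := by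
    rw [thetaTerm, quadratic]
    simp only [Pi.zero_apply, mul_zero, Finset.sum_const_zero, add_zero]
    push_cast
    ring_nf
  rw [exponent, Complex.norm_exp, Complex.re_ofReal_mul, Complex.I_mul_re,
    im_dotProduct_mulVec_ofReal, smul_mulVec, dotProduct_smul, smul_eq_mul, mul_neg]

lemma summable_norm_thetaTerm_zero (hN0 : 0 < N) (hpos : (P.map Complex.im).PosDef)
    (μ : Fin g → ℤ) : Summable fun n => ‖thetaTerm g N P μ 0 n‖ := by
  simpa only [norm_thetaTerm_zero] using summable_exp_neg_dotProduct_mulVec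
    (hpos.smul (by positivity : 0 < Real.pi * N)) fun j => (μ j : ℝ) / N

lemma thetaTerm_ofReal (hN0 : 0 < N) (μ n : Fin g → ℤ) (x : Fin g → ℝ) :
    thetaTerm g N P μ (fun j => (x j : ℂ)) n =
      thetaTerm g N P μ 0 n * mFourier (μ + N • n) (fun j => (x j : UnitAddCircle)) := by
  have hN : (N : ℂ) ≠ 0 := by exact_mod_cast hN0.ne'
  have frequency : ∑ j, (((μ + N • n) j : ℤ) : ℂ) * x j =
      N * ∑ j, ((μ j : ℂ) / N + n j) * x j := by
    rw [Finset.mul_sum]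
    refine Finset.sum_congr rfl fun j _ => ?_
    have hj : (μ + N • n) j = μ j + N * n j := by simp
    rw [hj]
    push_cast
    field_simp
  rw [mFourier_coe, frequency, thetaTerm, thetaTerm, ← Complex.exp_add]
  simp only [Pi.zero_apply, mul_zero, Finset.sum_const_zero, add_zero]
  congr 1
  ring

/-- The restriction of `θ_μ^Π` to `ℝ^g`, as a continuous function on `ℝ^g / ℤ^g` given by its
Fourier series; the coefficient of `μ + N n` is the term of index `n` of `θ_μ^Π(0)`. -/
noncomputable def thetaTorus (g N : ℕ) (P : Matrix (Fin g) (Fin g) ℂ) (μ : Fin g → ℤ) :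
    C(UnitAddTorus (Fin g), ℂ) :=
  ∑' n : Fin g → ℤ, thetaTerm g N P μ 0 n • mFourier (μ + N • n)

lemma theta_ofReal (hN0 : 0 < N) (hpos : (P.map Complex.im).PosDef) (μ : Fin g → ℤ)
    (x : Fin g → ℝ) :
    theta g N P μ (fun j => (x j : ℂ)) =
      thetaTorus g N P μ (fun j => (x j : UnitAddCircle)) := by
  have hs := summable_smul_mFourier (summable_norm_thetaTerm_zero hN0 hpos μ) (μ + N • ·)
  simp only [theta, thetaTorus, ← ContinuousMap.tsum_apply hs, thetaTerm_ofReal hN0,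
    ContinuousMap.smul_apply, smul_eq_mul]

lemma mFourierCoeffCLM_thetaTorus_self (hN0 : 0 < N) (hpos : (P.map Complex.im).PosDef)
    (μ : Fin g → ℤ) : mFourierCoeffCLM μ (thetaTorus g N P μ) = thetaTerm g N P μ 0 0 := by
  rw [thetaTorus, mFourierCoeffCLM_tsum_smul_mFourier (summable_norm_thetaTerm_zero hN0 hpos μ)]
  simp [-nsmul_eq_mul, hN0.ne']

lemma mFourierCoeffCLM_thetaTorus_of_ne (hN0 : 0 < N) (hpos : (P.map Complex.im).PosDef)
    {μ ν : Fin g → ℤ} (h : (fun j => (ν j : ZMod N)) ≠ fun j => (μ j : ZMod N)) :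
    mFourierCoeffCLM ν (thetaTorus g N P μ) = 0 := by
  have hne (n : Fin g → ℤ) : ν ≠ μ + N • n := by
    rintro rfl
    exact h <| by simp
  rw [thetaTorus, mFourierCoeffCLM_tsum_smul_mFourier (summable_norm_thetaTerm_zero hN0 hpos μ)]
  simp only [hne, if_false, tsum_zero]

lemma linearIndependent_thetaTorus (hN0 : 0 < N) (hpos : (P.map Complex.im).PosDef) {ι : Type*}
    {μ : ι → Fin g → ℤ} (hμ : Function.Injective fun i j => (μ i j : ZMod N)) :
    LinearIndependent ℂ fun i => thetaTorus g N P (μ i) := by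
  refine .of_pairwise_dual_eq_zero_one _
    (fun i => (thetaTerm g N P (μ i) 0 0)⁻¹ • (mFourierCoeffCLM (μ i)).toLinearMap)
    (fun i j hij => ?_) fun i => ?_
  · simp [mFourierCoeffCLM_thetaTorus_of_ne hN0 hpos (hμ.ne hij)]
  · simp [mFourierCoeffCLM_thetaTorus_self hN0 hpos, thetaTerm_ne_zero]

end Theta

lemma injective_intCast_zmod_pi_fin (ι : Type*) (N : ℕ) :
    Function.Injective fun (m : ι → Fin N) j => (((m j : ℕ) : ℤ) : ZMod N) := by
  intro m m' h
  ext j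
  have hmod : (m j : ℕ) ≡ m' j [MOD N] := by
    simpa only [Int.cast_natCast, ZMod.natCast_eq_natCast_iff] using congrFun h j
  exact hmod.eq_of_lt_of_lt (m j).2 (m' j).2

theorem theta_linearIndependent_general {g N : ℕ} (hN0 : 0 < N) {P : Matrix (Fin g) (Fin g) ℂ}
    (hpos : (P.map Complex.im).PosDef) {ι : Type*} {μ : ι → Fin g → ℤ}
    (hμ : Function.Injective fun i j => (μ i j : ZMod N)) :
    LinearIndependent ℂ fun i => theta g N P (μ i) := by
  let restrict : ((Fin g → ℂ) → ℂ) →ₗ[ℂ] (Fin g → ℝ) → ℂ := .funLeft ℂ ℂ fun x j => (x j : ℂ)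
  let fromTorus : C(UnitAddTorus (Fin g), ℂ) →ₗ[ℂ] (Fin g → ℝ) → ℂ :=
    .funLeft ℂ ℂ (fun x j => (x j : UnitAddCircle)) ∘ₗ ContinuousMap.coeFnLinearMap ℂ
  have fromTorus_injective : Function.Injective fromTorus :=
    (LinearMap.funLeft_injective_of_surjective ℂ ℂ _
      (Function.Surjective.piMap fun _ => QuotientAddGroup.mk_surjective)).comp
      DFunLike.coe_injective
  have restrict_theta : restrict ∘ (fun i => theta g N P (μ i)) =
      fromTorus ∘ fun i => thetaTorus g N P (μ i) :=
    funext fun i => funext fun x => theta_ofReal hN0 hpos (μ i) x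
  refine LinearIndependent.of_comp restrict ?_
  rw [restrict_theta]
  exact (linearIndependent_thetaTorus hN0 hpos hμ).map_injOn fromTorus fromTorus_injective.injOn

/-- The theta series `θ_μ^Π`, for `μ ∈ {0,…,N−1}^g`, are linearly independent over `ℂ`
in the space of functions `ℂ^g → ℂ`. -/
theorem theta_linearIndependent (g N : ℕ) (hg : 1 ≤ g) (hN0 : 0 < N) (hN : Even N)
    (P : Matrix (Fin g) (Fin g) ℂ) (hsym : P.IsSymm)
    (hpos : (P.map Complex.im).PosDef) :
    LinearIndependent ℂ
      (fun m : Fin g → Fin N => theta g N P (fun j => ((m j : ℕ) : ℤ))) := by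
  exact theta_linearIndependent_general hN0 hpos (injective_intCast_zmod_pi_fin (Fin g) N)
end

section
/- Let g ≥ 1 be an integer, N a positive even integer, and Π a symmetric g×g complex matrix whose imaginary part Π_I is positive definite. If f : ℂ^g → ℂ is holomorphic and satisfies, for all z ∈ ℂ^g and all j ∈ {1,…,g}, the periodicity conditions f(z + e_j) = f(z) and f(z + Π e_j) = exp(−2πiN z_j − πiN Π_{jj}) f(z) (where e_j is the j-th standard basis vector and Π e_j the j-th column of Π), then f is a ℂ-linear combination of the theta series {θ_μ^Π : μ ∈ {0,1,…,N−1}^g}; consequently the space of classical theta functions has complex dimension N^g. -/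
open scoped BigOperators

/-- The space of classical theta functions: holomorphic functions `f : ℂ^g → ℂ`
satisfying the periodicity conditions `f(z+e_j) = f(z)` and
`f(z+Πe_j) = exp(−2πiN z_j − πiN Π_{jj}) f(z)`. -/
noncomputable def thetaSpace (g N : ℕ) (P : Matrix (Fin g) (Fin g) ℂ) :
    Submodule ℂ ((Fin g → ℂ) → ℂ) where
  carrier := {f | Differentiable ℂ f ∧
    (∀ (z : Fin g → ℂ) (j : Fin g), f (z + Pi.single j 1) = f z) ∧
    (∀ (z : Fin g → ℂ) (j : Fin g), f (z + fun k => P k j)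
      = Complex.exp (-(2 * Real.pi * Complex.I * N * z j)
          - Real.pi * Complex.I * N * P j j) * f z)}
  zero_mem' := by
    refine ⟨differentiable_const 0, fun z j => rfl, fun z j => by simp⟩
  add_mem' := by
    rintro f h ⟨hf, hf1, hf2⟩ ⟨hh, hh1, hh2⟩
    refine ⟨hf.add hh, fun z j => by simp [hf1 z j, hh1 z j], fun z j => ?_⟩
    simp only [Pi.add_apply, hf2 z j, hh2 z j]
    ring
  smul_mem' := by
    rintro c f ⟨hf, hf1, hf2⟩
    refine ⟨hf.const_smul c, fun z j => by simp [hf1 z j], fun z j => ?_⟩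
    simp only [Pi.smul_apply, hf2 z j, smul_eq_mul]
    ring

/-!
A `ℤ^g`-periodic entire function `f` has Fourier coefficients `c(a)`, `a ∈ ℤ^g`, and shifting the
contour of integration by `w ∈ ℂ^g` shows that those of `f(· + w)` are `exp(2πi⟨a, w⟩) c(a)`. For
`w = Πe_j` the quasi-periodicity of a theta function therefore becomes a recursion relating
`c(a + Ne_j)` to `c(a)`, which says exactly that `c(a) / exp(πi aᵀΠa / N)` depends only on `a`
modulo `N`, so that `f` is determined by `N^g` numbers. Conversely, the Gaussian
`exp(πi aᵀΠa / N)` decays because `Im Π` is positive definite, so its restriction to the coset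
`μ + Nℤ^g` is the coefficient sequence of an entire function, namely `θ_μ`.
-/

namespace ClassicalTheta

open MeasureTheory UnitAddTorus

attribute [local instance] instMeasureSpaceUnitAddCircle
  instIsAddHaarMeasureUnitAddCircleVolume instIsProbabilityMeasureUnitAddCircleVolume

variable {ι : Type*}

section Covering

/-- The covering map `ℝ^ι → ℝ^ι / ℤ^ι`. -/
def toUnitAddTorus : C(ι → ℝ, UnitAddTorus ι) :=
  ⟨fun x j ↦ (x j : UnitAddCircle), by fun_prop⟩

theorem isQuotientMap_toUnitAddTorus : Topology.IsQuotientMap (toUnitAddTorus (ι := ι)) :=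
  (IsOpenQuotientMap.piMap fun _ : ι ↦ QuotientAddGroup.isOpenQuotientMap_mk).isQuotientMap

theorem exists_eq_add_of_toUnitAddTorus_eq {x y : ι → ℝ}
    (h : toUnitAddTorus x = toUnitAddTorus y) :
    ∃ n : ι → ℤ, x = y + fun j ↦ (n j : ℝ) := by
  have hj (j : ι) : ∃ n : ℤ, x j = y j + n := by
    obtain ⟨n, hn⟩ := (QuotientAddGroup.eq_iff_sub_mem.mp (congrFun h j))
    exact ⟨n, by simpa [sub_eq_iff_eq_add'] using hn.symm⟩
  choose n hn using hj
  exact ⟨n, funext hn⟩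

end Covering

section Periods

theorem intCast_single [DecidableEq ι] (j : ι) (n : ℤ) :
    (fun k ↦ ((Pi.single j n : ι → ℤ) k : ℂ)) = Pi.single j (n : ℂ) := by
  ext k
  simp only [Pi.single_apply, Int.cast_ite, Int.cast_zero]

theorem periodic_map_of_periodic_single {ι M β : Type*} [Finite ι] [DecidableEq ι]
    [AddCommGroup M] {f : M → β} (T : (ι → ℤ) →+ M)
    (h : ∀ j, Function.Periodic f (T (Pi.single j 1))) (n : ι → ℤ) :
    Function.Periodic f (T n) := by
  have := Fintype.ofFinite ι
  let periods : AddSubgroup M :=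
    { carrier := {c | Function.Periodic f c}
      zero_mem' := fun x ↦ by rw [add_zero]
      add_mem' := Function.Periodic.add_period
      neg_mem' := Function.Periodic.neg }
  suffices T n ∈ periods from this
  rw [pi_eq_sum_univ' n, map_sum]
  refine sum_mem fun j _ ↦ ?_
  rw [map_zsmul]
  exact zsmul_mem (h j) (n j)

end Periods

variable [Fintype ι]

section Torus

/-- The `a`-th Fourier coefficient `F ↦ ∫ F(t) exp(-2πi⟨a, t⟩) dt` as a continuous linear
functional on `C(𝕋^ι, ℂ)`. -/
noncomputable def torusCoeff (a : ι → ℤ) : C(UnitAddTorus ι, ℂ) →L[ℂ] ℂ :=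
  (innerSL ℂ (mFourierBasis a)).comp (ContinuousMap.toLp 2 volume ℂ)

theorem torusCoeff_apply (a : ι → ℤ) (F : C(UnitAddTorus ι, ℂ)) :
    torusCoeff a F = mFourierCoeff F a := by
  rw [← mFourierCoeff_toLp, ← mFourierBasis_repr, HilbertBasis.repr_apply_apply]
  rfl

theorem torusCoeff_eq_integral (a : ι → ℤ) (F : C(UnitAddTorus ι, ℂ)) :
    torusCoeff a F = ∫ t, (mFourier (-a) * F) t :=
  torusCoeff_apply a F

theorem torusCoeff_mFourier [DecidableEq (ι → ℤ)] (a b : ι → ℤ) :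
    torusCoeff a (mFourier b) = if a = b then 1 else 0 := by
  rw [← orthonormal_iff_ite.mp mFourierBasis.orthonormal a b, coe_mFourierBasis]
  simp only [torusCoeff, coe_mFourierBasis]
  rfl

theorem torusCoeff_of_hasSum {c : (ι → ℤ) → ℂ} {F : C(UnitAddTorus ι, ℂ)}
    (hF : HasSum (fun a ↦ c a • mFourier a) F) (a : ι → ℤ) : torusCoeff a F = c a := by
  classical
  have h := (torusCoeff a).hasSum hF
  simp only [map_smul, torusCoeff_mFourier, smul_eq_mul, mul_ite, mul_one, mul_zero] at h
  rw [h.unique (hasSum_single a fun b hb ↦ if_neg hb.symm), if_pos rfl]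

theorem eq_zero_of_torusCoeff_eq_zero {F : C(UnitAddTorus ι, ℂ)}
    (hF : ∀ a, torusCoeff a F = 0) : F = 0 := by
  have hcoeff : mFourierCoeff F = 0 := funext fun a ↦ (torusCoeff_apply a F).symm.trans (hF a)
  have hsum : Summable (mFourierCoeff F) := hcoeff ▸ summable_zero
  ext t
  refine (hasSum_mFourier_series_apply_of_summable hsum t).unique ?_
  simp only [hcoeff, Pi.zero_apply, zero_smul]
  exact hasSum_zero

theorem integral_intervalIntegral_add (F : C(UnitAddTorus ι, ℂ)) (γ : C(ℝ, UnitAddTorus ι)) :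
    ∫ t, ∫ x in (0 : ℝ)..1, F (t + γ x) = ∫ t, F t := by
  simp_rw [intervalIntegral.integral_of_le zero_le_one]
  rw [integral_integral_swap]
  · simp only [integral_add_right_eq_self (μ := volume) F, integral_const, MeasurableSet.univ,
      measureReal_restrict_apply, Set.univ_inter, Real.volume_real_Ioc, sub_zero, zero_le_one,
      sup_of_le_left, one_smul]
  · refine Integrable.of_bound (C := ‖F‖) ?_ (.of_forall fun p ↦ F.norm_coe_le_norm _)
    exact Continuous.aestronglyMeasurable (by fun_prop)

end Torus

/-- The algebra of entire functions on `ℂ^ι` that are invariant under translation by `ℤ^ι`. -/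
def entirePeriodic (ι : Type*) [Fintype ι] : Subalgebra ℂ ((ι → ℂ) → ℂ) where
  carrier := {f | Differentiable ℂ f ∧ ∀ n : ι → ℤ, Function.Periodic f (fun j ↦ (n j : ℂ))}
  mul_mem' hf hg := ⟨hf.1.mul hg.1, fun n ↦ (hf.2 n).mul (hg.2 n)⟩
  add_mem' hf hg := ⟨hf.1.add hg.1, fun n ↦ (hf.2 n).add (hg.2 n)⟩
  algebraMap_mem' c := ⟨differentiable_const c, fun _ _ ↦ rfl⟩

namespace entirePeriodic

theorem mem_of_periodic_single [DecidableEq ι] {f : (ι → ℂ) → ℂ} (hf : Differentiable ℂ f)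
    (h : ∀ j, Function.Periodic f (Pi.single j 1)) : f ∈ entirePeriodic ι := by
  refine ⟨hf, periodic_map_of_periodic_single ((Int.castAddHom ℂ).compLeft ι) fun j ↦ ?_⟩
  change Function.Periodic f fun k ↦ ((Pi.single j 1 : ι → ℤ) k : ℂ)
  rw [intCast_single, Int.cast_one]
  exact h j

theorem periodic_single [DecidableEq ι] (φ : entirePeriodic ι) (j : ι) :
    Function.Periodic φ.1 (Pi.single j 1) := by
  have h := φ.2.2 (Pi.single j 1)
  rwa [intCast_single, Int.cast_one] at h

/-- The translation `f ↦ f(· + w)`. -/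
def translate (w : ι → ℂ) : entirePeriodic ι →ₐ[ℂ] entirePeriodic ι where
  toFun φ := ⟨fun z ↦ φ.1 (z + w), φ.2.1.comp (differentiable_id.add_const w),
    fun n z ↦ by simp only [add_right_comm z _ w, φ.2.2 n _]⟩
  map_one' := rfl
  map_mul' _ _ := rfl
  map_zero' := rfl
  map_add' _ _ := rfl
  commutes' _ := rfl

theorem translate_apply (w z : ι → ℂ) (φ : entirePeriodic ι) :
    (translate w φ).1 z = φ.1 (z + w) := rfl

theorem translate_zero (φ : entirePeriodic ι) : translate 0 φ = φ :=
  Subtype.ext <| funext fun z ↦ by rw [translate_apply, add_zero]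

theorem translate_add (v w : ι → ℂ) (φ : entirePeriodic ι) :
    translate (v + w) φ = translate v (translate w φ) :=
  Subtype.ext <| funext fun z ↦ by simp only [translate_apply, add_assoc]

/-- The character `z ↦ exp(2πi⟨a, z⟩)` of `ℂ^ι / ℤ^ι`. -/
noncomputable def character (a : ι → ℤ) : entirePeriodic ι :=
  ⟨fun z ↦ Complex.exp (2 * Real.pi * Complex.I * ∑ j, a j * z j), by fun_prop, fun n z ↦ by
    have h : 2 * Real.pi * Complex.I * ∑ j, (a j : ℂ) * (z + fun j ↦ (n j : ℂ)) j =
        2 * Real.pi * Complex.I * ∑ j, a j * z j +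
          (∑ j, a j * n j : ℤ) * (2 * Real.pi * Complex.I) := by
      push_cast
      simp only [Pi.add_apply, mul_add, Finset.sum_add_distrib, mul_comm]
    simp only [h, Complex.exp_add, Complex.exp_int_mul_two_pi_mul_I, mul_one]⟩

theorem character_apply (a : ι → ℤ) (z : ι → ℂ) :
    (character a).1 z = Complex.exp (2 * Real.pi * Complex.I * ∑ j, a j * z j) := rfl

theorem character_zero : character (0 : ι → ℤ) = 1 :=
  Subtype.ext <| funext fun z ↦ by simp [character_apply]

theorem character_add (a b : ι → ℤ) : character (a + b) = character a * character b :=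
  Subtype.ext <| funext fun z ↦ by
    change Complex.exp _ = Complex.exp _ * Complex.exp _
    simp only [← Complex.exp_add, Pi.add_apply, Int.cast_add, add_mul, Finset.sum_add_distrib,
      mul_add]

theorem character_mul_character_neg (a : ι → ℤ) (z : ι → ℂ) :
    (character a).1 z * (character (-a)).1 z = 1 := by
  have h : character a * character (-a) = 1 := by
    rw [← character_add, add_neg_cancel, character_zero]
  exact congrFun (congrArg Subtype.val h) z

theorem translate_character (a : ι → ℤ) (w : ι → ℂ) :
    translate w (character a) = (character a).1 w • character a :=
  Subtype.ext <| funext fun z ↦ by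
    change Complex.exp _ = Complex.exp _ * Complex.exp _
    simp only [← Complex.exp_add, Pi.add_apply, Finset.sum_add_distrib, mul_add, add_comm]

/-- The restriction of an entire periodic function to `ℝ^ι`. -/
def restrictReal (φ : entirePeriodic ι) : C(ι → ℝ, ℂ) :=
  ⟨fun x ↦ φ.1 fun j ↦ (x j : ℂ), φ.2.1.continuous.comp (by fun_prop)⟩

theorem factorsThrough_restrictReal (φ : entirePeriodic ι) :
    Function.FactorsThrough (restrictReal φ) toUnitAddTorus := fun x y hxy ↦ by
  obtain ⟨n, rfl⟩ := exists_eq_add_of_toUnitAddTorus_eq hxy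
  simpa [restrictReal, Pi.add_def] using φ.2.2 n fun j ↦ (y j : ℂ)

/-- The restriction of an entire periodic function to `ℝ^ι`, as a function on the torus
`ℝ^ι / ℤ^ι`. -/
noncomputable def toTorus : entirePeriodic ι →ₐ[ℂ] C(UnitAddTorus ι, ℂ) where
  toFun φ := isQuotientMap_toUnitAddTorus.lift (restrictReal φ) (factorsThrough_restrictReal φ)
  map_one' := rfl
  map_mul' _ _ := rfl
  map_zero' := rfl
  map_add' _ _ := rfl
  commutes' _ := rfl

theorem toTorus_toUnitAddTorus (φ : entirePeriodic ι) (x : ι → ℝ) :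
    toTorus φ (toUnitAddTorus x) = φ.1 fun j ↦ (x j : ℂ) :=
  DFunLike.congr_fun (isQuotientMap_toUnitAddTorus.lift_comp _ (factorsThrough_restrictReal φ)) x

theorem toTorus_character (a : ι → ℤ) : toTorus (character a) = mFourier a := by
  ext t
  obtain ⟨x, rfl⟩ := isQuotientMap_toUnitAddTorus.surjective t
  rw [toTorus_toUnitAddTorus, character_apply, Finset.mul_sum, Complex.exp_sum]
  refine Finset.prod_congr rfl fun j _ ↦ ?_
  change _ = fourier (a j) (x j : UnitAddCircle)
  rw [fourier_coe_apply, Complex.ofReal_one, div_one, mul_assoc _ (a j : ℂ)]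

theorem toTorus_translate_ofReal (φ : entirePeriodic ι) (r : ι → ℝ) (t : UnitAddTorus ι) :
    toTorus (translate (fun j ↦ (r j : ℂ)) φ) t = toTorus φ (t + toUnitAddTorus r) := by
  obtain ⟨x, rfl⟩ := isQuotientMap_toUnitAddTorus.surjective t
  have hadd : toUnitAddTorus x + toUnitAddTorus r = toUnitAddTorus (x + r) := rfl
  rw [hadd, toTorus_toUnitAddTorus, toTorus_toUnitAddTorus, translate_apply]
  simp only [Pi.add_def, Complex.ofReal_add]

theorem eq_of_forall_toTorus_translate {φ ψ : entirePeriodic ι}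
    (h : ∀ w, toTorus (translate w φ) = toTorus (translate w ψ)) : φ = ψ := by
  ext w
  simpa [toTorus_toUnitAddTorus, translate_apply, ← Pi.zero_def] using
    DFunLike.congr_fun (h w) (toUnitAddTorus 0)

end entirePeriodic

section ContourShift

theorem intervalIntegral_add_mul_I {E : Type*} [NormedAddCommGroup E] [NormedSpace ℂ E]
    {h : ℂ → E} (hd : Differentiable ℂ h) {T : ℝ} (hp : Function.Periodic h T) (y : ℝ) :
    ∫ x in (0 : ℝ)..T, h (x + y * Complex.I) = ∫ x in (0 : ℝ)..T, h x := by
  have hrect := Complex.integral_boundary_rect_eq_zero_of_differentiableOn h 0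
    (T + y * Complex.I) hd.differentiableOn
  have hside (t : ℝ) : h (T + t * Complex.I) = h (t * Complex.I) := by rw [add_comm, hp]
  refine (sub_eq_zero.mp ?_).symm
  simpa [hside] using hrect

namespace entirePeriodic

theorem integral_toTorus_translate_ofReal (φ : entirePeriodic ι) (r : ι → ℝ) :
    ∫ t, toTorus (translate (fun j ↦ (r j : ℂ)) φ) t = ∫ t, toTorus φ t := by
  simp_rw [toTorus_translate_ofReal]
  exact integral_add_right_eq_self (μ := volume) (toTorus φ) _

-- Averaging over the circles in the `j`-th direction reduces this to the one-dimensional shift.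
theorem integral_toTorus_translate_single_I [DecidableEq ι] (φ : entirePeriodic ι) (j : ι)
    (y : ℝ) :
    ∫ t, toTorus (translate (Pi.single j (y * Complex.I)) φ) t = ∫ t, toTorus φ t := by
  let γ : C(ℝ, UnitAddTorus ι) :=
    toUnitAddTorus.comp ⟨fun x ↦ Pi.single j x, continuous_single (A := fun _ ↦ ℝ) j⟩
  have hγ (ψ : entirePeriodic ι) (u : ι → ℝ) (x : ℝ) :
      toTorus ψ (toUnitAddTorus u + γ x) = ψ.1 ((fun k ↦ (u k : ℂ)) + Pi.single j (x : ℂ)) := by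
    have hadd : toUnitAddTorus u + γ x = toUnitAddTorus (u + Pi.single j x) := rfl
    rw [hadd, toTorus_toUnitAddTorus]
    refine congrArg ψ.1 (funext fun k ↦ ?_)
    rcases eq_or_ne k j with rfl | hk <;> simp [*]
  rw [← integral_intervalIntegral_add _ γ, ← integral_intervalIntegral_add (toTorus φ) γ]
  congr 1 with t
  obtain ⟨u, rfl⟩ := isQuotientMap_toUnitAddTorus.surjective t
  simp only [hγ, translate_apply, add_assoc, ← Pi.single_add]
  have hd : Differentiable ℂ fun s : ℂ ↦ φ.1 ((fun k ↦ (u k : ℂ)) + Pi.single j s) :=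
    φ.2.1.comp ((ContinuousLinearMap.single ℂ (fun _ ↦ ℂ) j).differentiable.const_add _)
  refine intervalIntegral_add_mul_I (T := 1) hd (fun s ↦ ?_) y
  simp only [Complex.ofReal_one, Pi.single_add, ← add_assoc, periodic_single φ j _]

theorem integral_toTorus_translate (φ : entirePeriodic ι) (w : ι → ℂ) :
    ∫ t, toTorus (translate w φ) t = ∫ t, toTorus φ t := by
  classical
  let invariant : AddSubmonoid (ι → ℂ) :=
    { carrier := {w | ∀ φ, ∫ t, toTorus (translate w φ) t = ∫ t, toTorus φ t}
      zero_mem' := fun φ ↦ by rw [translate_zero]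
      add_mem' := fun hv hw φ ↦ by rw [translate_add, hv, hw] }
  have hre : (fun j ↦ ((w j).re : ℂ)) ∈ invariant := fun φ ↦
    integral_toTorus_translate_ofReal φ _
  have him (j : ι) : Pi.single j ((w j).im * Complex.I) ∈ invariant := fun φ ↦
    integral_toTorus_translate_single_I φ j _
  have hw : w = (fun j ↦ ((w j).re : ℂ)) + ∑ j, Pi.single j ((w j).im * Complex.I) := by
    ext k
    simp [Finset.sum_apply, Pi.single_apply]
  exact (hw ▸ invariant.add_mem hre (sum_mem fun j _ ↦ him j) : w ∈ invariant) φ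

/-- The Fourier coefficients of the restriction of an entire periodic function to `ℝ^ι`. -/
noncomputable def fourierCoeff (a : ι → ℤ) : entirePeriodic ι →ₗ[ℂ] ℂ :=
  (torusCoeff a).toLinearMap ∘ₗ toTorus.toLinearMap

theorem fourierCoeff_eq_integral (a : ι → ℤ) (φ : entirePeriodic ι) :
    fourierCoeff a φ = ∫ t, toTorus (character (-a) * φ) t := by
  rw [map_mul, toTorus_character]
  exact torusCoeff_eq_integral a (toTorus φ)

theorem fourierCoeff_character_mul (a b : ι → ℤ) (φ : entirePeriodic ι) :
    fourierCoeff a (character b * φ) = fourierCoeff (a - b) φ := by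
  rw [fourierCoeff_eq_integral, fourierCoeff_eq_integral, ← mul_assoc, ← character_add,
    neg_sub, neg_add_eq_sub]

-- Shift the contour by `w` in `∫ exp(-2πi⟨a, t⟩) φ(t) dt`.
theorem fourierCoeff_translate (a : ι → ℤ) (w : ι → ℂ) (φ : entirePeriodic ι) :
    fourierCoeff a (translate w φ) = (character a).1 w * fourierCoeff a φ := by
  have h : character (-a) * translate w φ =
      (character a).1 w • translate w (character (-a) * φ) := by
    rw [map_mul, translate_character, smul_mul_assoc, smul_smul,
      character_mul_character_neg, one_smul]
  rw [fourierCoeff_eq_integral, fourierCoeff_eq_integral, h, map_smul,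
    ← integral_toTorus_translate _ w]
  exact integral_const_mul _ _

theorem eq_of_fourierCoeff_eq {φ ψ : entirePeriodic ι}
    (h : ∀ a, fourierCoeff a φ = fourierCoeff a ψ) : φ = ψ := by
  refine eq_of_forall_toTorus_translate fun w ↦ sub_eq_zero.mp ?_
  rw [← map_sub, ← map_sub]
  refine eq_zero_of_torusCoeff_eq_zero fun a ↦ ?_
  change fourierCoeff a (translate w (φ - ψ)) = 0
  rw [fourierCoeff_translate, map_sub, h, sub_self, mul_zero]

end entirePeriodic

end ContourShift

section ExponentialSeries

/-- Coefficients that decay faster than every exponential in the sup norm of the index: those for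
which `∑ c_a exp(2πi⟨a, z⟩)` converges normally on bounded sets. -/
def SuperexpDecay (c : (ι → ℤ) → ℂ) : Prop :=
  ∀ B : ℝ, Summable fun a ↦ ‖c a‖ * Real.exp (B * ‖a‖)

theorem SuperexpDecay.indicator {c : (ι → ℤ) → ℂ} (hc : SuperexpDecay c) (s : Set (ι → ℤ)) :
    SuperexpDecay (s.indicator c) := fun B ↦
  (hc B).of_nonneg_of_le (fun _ ↦ by positivity) fun a ↦ by
    gcongr; exact norm_indicator_le_norm_self c a

theorem SuperexpDecay.summable_norm {c : (ι → ℤ) → ℂ} (hc : SuperexpDecay c) :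
    Summable fun a ↦ ‖c a‖ := by
  simpa using hc 0

/-- The linear form `z ↦ 2πi⟨a, z⟩`, the exponent of `entirePeriodic.character a`. -/
noncomputable def characterExponent (a : ι → ℤ) : (ι → ℂ) →L[ℂ] ℂ :=
  (2 * Real.pi * Complex.I) • ∑ j, (a j : ℂ) • ContinuousLinearMap.proj j

theorem exp_characterExponent (a : ι → ℤ) (z : ι → ℂ) :
    Complex.exp (characterExponent a z) = (entirePeriodic.character a).1 z := by
  simp [characterExponent, entirePeriodic.character_apply]

theorem norm_characterExponent_le (a : ι → ℤ) :
    ‖characterExponent a‖ ≤ 2 * Real.pi * Fintype.card ι * ‖a‖ := by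
  refine ContinuousLinearMap.opNorm_le_bound _ (by positivity) fun z ↦ ?_
  have hsum : ‖∑ j, (a j : ℂ) * z j‖ ≤ Fintype.card ι * (‖a‖ * ‖z‖) := by
    refine (norm_sum_le_of_le (Finset.univ : Finset ι) (f := fun j ↦ (a j : ℂ) * z j)
      (n := fun _ ↦ ‖a‖ * ‖z‖) fun j _ ↦ ?_).trans_eq (by simp)
    rw [norm_mul, Complex.norm_intCast]
    exact mul_le_mul (norm_le_pi_norm a j) (norm_le_pi_norm z j) (norm_nonneg _) (norm_nonneg _)
  calc ‖characterExponent a z‖ = 2 * Real.pi * ‖∑ j, (a j : ℂ) * z j‖ := by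
        simp [characterExponent, abs_of_pos Real.pi_pos]
    _ ≤ 2 * Real.pi * (Fintype.card ι * (‖a‖ * ‖z‖)) := by gcongr
    _ = 2 * Real.pi * Fintype.card ι * ‖a‖ * ‖z‖ := by ring

theorem norm_character_le (a : ι → ℤ) (z : ι → ℂ) :
    ‖(entirePeriodic.character a).1 z‖ ≤ Real.exp (2 * Real.pi * Fintype.card ι * ‖a‖ * ‖z‖) := by
  rw [← exp_characterExponent]
  refine (Complex.norm_exp_le_exp_norm _).trans (Real.exp_le_exp.mpr ?_)
  exact (characterExponent a).le_of_opNorm_le (norm_characterExponent_le a) z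

theorem summable_mul_character {c : (ι → ℤ) → ℂ} (hc : SuperexpDecay c) (z : ι → ℂ) :
    Summable fun a ↦ c a * (entirePeriodic.character a).1 z := by
  refine .of_norm_bounded (hc (2 * Real.pi * Fintype.card ι * ‖z‖)) fun a ↦ ?_
  rw [norm_mul, mul_right_comm _ ‖z‖]
  gcongr
  exact norm_character_le a z

theorem differentiable_tsum_mul_character {c : (ι → ℤ) → ℂ} (hc : SuperexpDecay c) :
    Differentiable ℂ fun z ↦ ∑' a, c a * (entirePeriodic.character a).1 z := by
  intro z
  set K : ℝ := 2 * Real.pi * Fintype.card ι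
  set R : ℝ := ‖z‖ + 1
  have hz : z ∈ Metric.ball (0 : ι → ℂ) R := by simp [R]
  have hderiv (a : ι → ℤ) (w : ι → ℂ) : HasFDerivAt
      (fun w ↦ c a * (entirePeriodic.character a).1 w)
      (c a • (entirePeriodic.character a).1 w • characterExponent a) w := by
    simp only [← exp_characterExponent]
    exact (characterExponent a).hasFDerivAt.cexp.const_mul (c a)
  have hbound (a : ι → ℤ) (w : ι → ℂ) (hw : w ∈ Metric.ball (0 : ι → ℂ) R) :
      ‖c a • (entirePeriodic.character a).1 w • characterExponent a‖ ≤
        ‖c a‖ * Real.exp ((K * R + K) * ‖a‖) := by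
    have hchar : ‖(entirePeriodic.character a).1 w‖ ≤ Real.exp (K * ‖a‖ * R) := by
      refine (norm_character_le a w).trans (Real.exp_le_exp.mpr ?_)
      gcongr
      exact (mem_ball_zero_iff.mp hw).le
    have hexponent : ‖characterExponent a‖ ≤ Real.exp (K * ‖a‖) :=
      (norm_characterExponent_le a).trans (by linarith [Real.add_one_le_exp (K * ‖a‖)])
    rw [norm_smul, norm_smul, add_mul, mul_right_comm, Real.exp_add]
    gcongr
  exact (hasFDerivAt_tsum_of_isPreconnected (hc (K * R + K)) Metric.isOpen_ball
    (convex_ball _ _).isPreconnected (fun a w _ ↦ hderiv a w) hbound hz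
    (summable_mul_character hc z) hz).differentiableAt

namespace entirePeriodic

/-- The entire periodic function `z ↦ ∑ c_a exp(2πi⟨a, z⟩)`. -/
noncomputable def expSeries (c : (ι → ℤ) → ℂ) (hc : SuperexpDecay c) : entirePeriodic ι :=
  ⟨fun z ↦ ∑' a, c a * (character a).1 z, differentiable_tsum_mul_character hc,
    fun n z ↦ tsum_congr fun a ↦ by rw [(character a).2.2 n]⟩

theorem fourierCoeff_expSeries {c : (ι → ℤ) → ℂ} (hc : SuperexpDecay c) (a : ι → ℤ) :
    fourierCoeff a (expSeries c hc) = c a := by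
  have hsum : Summable fun a ↦ c a • (mFourier a : C(UnitAddTorus ι, ℂ)) :=
    .of_norm (by simpa only [norm_smul, mFourier_norm, mul_one] using hc.summable_norm)
  refine torusCoeff_of_hasSum (F := toTorus (expSeries c hc)) ?_ a
  convert hsum.hasSum
  ext t
  obtain ⟨x, rfl⟩ := isQuotientMap_toUnitAddTorus.surjective t
  rw [← ContinuousMap.tsum_apply hsum, toTorus_toUnitAddTorus]
  refine tsum_congr fun b ↦ ?_
  rw [ContinuousMap.smul_apply, ← toTorus_character, toTorus_toUnitAddTorus, smul_eq_mul]

end entirePeriodic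

theorem summable_prod_pi {α : Type*} {f : α → ℝ} (hf : Summable f) (h0 : 0 ≤ f) :
    Summable fun a : ι → α ↦ ∏ j, f (a j) := by
  classical
  refine summable_of_sum_le (fun a ↦ Finset.prod_nonneg fun j _ ↦ h0 _)
    (c := ∏ _j : ι, ∑' x, f x) fun s ↦ ?_
  calc ∑ a ∈ s, ∏ j, f (a j)
      ≤ ∑ a ∈ Fintype.piFinset fun j ↦ s.image (· j), ∏ j, f (a j) := by
        refine Finset.sum_le_sum_of_subset_of_nonneg (fun a ha ↦ ?_) fun a _ _ ↦
          Finset.prod_nonneg fun j _ ↦ h0 _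
        exact Fintype.mem_piFinset.mpr fun j ↦ Finset.mem_image_of_mem _ ha
    _ = ∏ j, ∑ x ∈ s.image (· j), f x := (Finset.prod_univ_sum _ _).symm
    _ ≤ ∏ _j, ∑' x, f x := by
        gcongr with j
        · exact fun j _ ↦ Finset.sum_nonneg fun x _ ↦ h0 x
        · exact hf.sum_le_tsum _ fun x _ ↦ h0 x

theorem summable_exp_neg_card_mul_norm :
    Summable fun a : ι → ℤ ↦ Real.exp (-(Fintype.card ι * ‖a‖)) := by
  have hint : Summable fun n : ℤ ↦ Real.exp (-|(n : ℝ)|) := by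
    apply Summable.of_nat_of_neg <;> simpa using Real.summable_exp_neg_nat
  refine (summable_prod_pi hint fun n ↦ by positivity).of_nonneg_of_le (fun a ↦ by positivity)
    fun a ↦ ?_
  rw [← Real.exp_sum, Real.exp_le_exp, Finset.sum_neg_distrib, neg_le_neg_iff]
  calc ∑ j, |(a j : ℝ)| ≤ Fintype.card ι • ‖a‖ := Pi.sum_norm_apply_le_norm a
    _ = _ := nsmul_eq_mul _ _

theorem SuperexpDecay.of_norm_le_exp_neg_sq {c : (ι → ℤ) → ℂ} {κ : ℝ} (hκ : 0 < κ)
    (h : ∀ a, ‖c a‖ ≤ Real.exp (-(κ * ‖a‖ ^ 2))) : SuperexpDecay c := fun B ↦ by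
  set D : ℝ := B + Fintype.card ι
  refine (summable_exp_neg_card_mul_norm.mul_left (Real.exp (D ^ 2 / (4 * κ)))).of_nonneg_of_le
    (fun a ↦ by positivity) fun a ↦ ?_
  have hsq : D * ‖a‖ ≤ D ^ 2 / (4 * κ) + κ * ‖a‖ ^ 2 := by
    have h0 : 0 ≤ (D - 2 * κ * ‖a‖) ^ 2 / (4 * κ) := by positivity
    have h1 : (D - 2 * κ * ‖a‖) ^ 2 / (4 * κ) = D ^ 2 / (4 * κ) + κ * ‖a‖ ^ 2 - D * ‖a‖ := by
      field
    linarith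
  calc ‖c a‖ * Real.exp (B * ‖a‖) ≤ Real.exp (-(κ * ‖a‖ ^ 2)) * Real.exp (B * ‖a‖) := by
        gcongr; exact h a
    _ ≤ Real.exp (D ^ 2 / (4 * κ)) * Real.exp (-(Fintype.card ι * ‖a‖)) := by
        rw [← Real.exp_add, ← Real.exp_add, Real.exp_le_exp]
        linarith [add_mul B (Fintype.card ι : ℝ) ‖a‖]

end ExponentialSeries

section Gaussian

open scoped Matrix
open entirePeriodic

theorem exists_mul_norm_sq_le {E : Type*} [NormedAddCommGroup E] [NormedSpace ℝ E]
    [FiniteDimensional ℝ E] {Q : E → ℝ} (hQ : Continuous Q)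
    (hsmul : ∀ (c : ℝ) x, Q (c • x) = c ^ 2 * Q x) (hpos : ∀ x ≠ 0, 0 < Q x) :
    ∃ κ > 0, ∀ x, κ * ‖x‖ ^ 2 ≤ Q x := by
  have : ProperSpace E := FiniteDimensional.proper ℝ E
  obtain ⟨κ, hκ, hle⟩ := (isCompact_sphere (0 : E) 1).exists_forall_le' hQ.continuousOn
    fun x hx ↦ hpos x (ne_zero_of_mem_unit_sphere ⟨x, hx⟩)
  refine ⟨κ, hκ, fun x ↦ ?_⟩
  rcases eq_or_ne x 0 with rfl | hx
  · simpa using (hsmul 0 0).ge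
  · have hunit : κ ≤ Q (‖x‖⁻¹ • x) := hle _ (by simp [norm_smul, hx])
    have hscale : Q x = ‖x‖ ^ 2 * Q (‖x‖⁻¹ • x) := by
      rw [← hsmul, smul_inv_smul₀ (norm_ne_zero_iff.mpr hx)]
    rw [hscale, mul_comm]
    gcongr

theorem exists_mul_norm_sq_le_dotProduct_mulVec {Y : Matrix ι ι ℝ} (hY : Y.PosDef) :
    ∃ κ > 0, ∀ x : ι → ℝ, κ * ‖x‖ ^ 2 ≤ x ⬝ᵥ Y *ᵥ x := by
  refine exists_mul_norm_sq_le (by fun_prop) (fun c x ↦ ?_) fun x hx ↦ ?_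
  · simp only [Matrix.mulVec_smul, dotProduct_smul, smul_dotProduct, smul_eq_mul]
    ring
  · simpa using hY.dotProduct_mulVec_pos hx

/-- The Gaussian coefficient `exp(πi aᵀτa)` of the Riemann theta function with period matrix
`τ`. -/
noncomputable def gaussianCoeff (τ : Matrix ι ι ℂ) (a : ι → ℤ) : ℂ :=
  Complex.exp (Real.pi * Complex.I * ((fun j ↦ (a j : ℂ)) ⬝ᵥ τ *ᵥ fun j ↦ (a j : ℂ)))

theorem gaussianCoeff_ne_zero (τ : Matrix ι ι ℂ) (a : ι → ℤ) : gaussianCoeff τ a ≠ 0 :=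
  Complex.exp_ne_zero _

theorem gaussianCoeff_add {τ : Matrix ι ι ℂ} (hτ : τ.IsSymm) (a b : ι → ℤ) :
    gaussianCoeff τ (a + b) =
      gaussianCoeff τ a * gaussianCoeff τ b * (character a).1 (τ *ᵥ fun j ↦ (b j : ℂ)) := by
  set x : ι → ℂ := fun j ↦ (a j : ℂ)
  set y : ι → ℂ := fun j ↦ (b j : ℂ)
  have hadd : (fun j ↦ ((a + b) j : ℂ)) = x + y := by ext j; simp [x, y]
  have hsymm : y ⬝ᵥ τ *ᵥ x = x ⬝ᵥ τ *ᵥ y := by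
    rw [Matrix.dotProduct_mulVec, dotProduct_comm, ← Matrix.mulVec_transpose, hτ.eq]
  change Complex.exp _ = Complex.exp (_ * (x ⬝ᵥ τ *ᵥ x)) * Complex.exp (_ * (y ⬝ᵥ τ *ᵥ y)) *
    Complex.exp (_ * (x ⬝ᵥ τ *ᵥ y))
  rw [hadd, ← Complex.exp_add, ← Complex.exp_add, Matrix.mulVec_add, dotProduct_add,
    add_dotProduct, add_dotProduct, hsymm]
  ring_nf

theorem norm_gaussianCoeff (τ : Matrix ι ι ℂ) (a : ι → ℤ) :
    ‖gaussianCoeff τ a‖ =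
      Real.exp (-(Real.pi * ((fun j ↦ (a j : ℝ)) ⬝ᵥ τ.map Complex.im *ᵥ fun j ↦ (a j : ℝ)))) := by
  have him : ((fun j ↦ (a j : ℂ)) ⬝ᵥ τ *ᵥ fun j ↦ (a j : ℂ)).im =
      (fun j ↦ (a j : ℝ)) ⬝ᵥ τ.map Complex.im *ᵥ fun j ↦ (a j : ℝ) := by
    simp [dotProduct, Matrix.mulVec, Complex.im_sum]
  rw [gaussianCoeff, Complex.norm_exp, ← him]
  simp [mul_assoc]

theorem superexpDecay_gaussianCoeff {τ : Matrix ι ι ℂ} (hτ : (τ.map Complex.im).PosDef) :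
    SuperexpDecay (gaussianCoeff τ) := by
  obtain ⟨κ, hκ, hle⟩ := exists_mul_norm_sq_le_dotProduct_mulVec hτ
  refine .of_norm_le_exp_neg_sq (mul_pos Real.pi_pos hκ) fun a ↦ ?_
  have hnorm : ‖fun j ↦ (a j : ℝ)‖ = ‖a‖ := rfl
  rw [norm_gaussianCoeff, Real.exp_le_exp, neg_le_neg_iff, mul_assoc, ← hnorm]
  gcongr
  exact hle _

theorem translate_eq_iff_periodic {τ : Matrix ι ι ℂ} (hτ : τ.IsSymm) (b : ι → ℤ)
    (φ : entirePeriodic ι) :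
    translate (τ *ᵥ fun j ↦ (b j : ℂ)) φ =
        (gaussianCoeff τ b)⁻¹ • (character (-b) * φ) ↔
      Function.Periodic (fun a ↦ fourierCoeff a φ / gaussianCoeff τ a) b := by
  have hcoeff (a : ι → ℤ) :
      fourierCoeff a (translate (τ *ᵥ fun j ↦ (b j : ℂ)) φ) =
          fourierCoeff a ((gaussianCoeff τ b)⁻¹ • (character (-b) * φ)) ↔
        fourierCoeff (a + b) φ / gaussianCoeff τ (a + b) =
          fourierCoeff a φ / gaussianCoeff τ a := by
    have ha := gaussianCoeff_ne_zero τ a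
    have hb := gaussianCoeff_ne_zero τ b
    have hχ : (character a).1 (τ *ᵥ fun j ↦ (b j : ℂ)) ≠ 0 := Complex.exp_ne_zero _
    rw [fourierCoeff_translate, map_smul, fourierCoeff_character_mul, sub_neg_eq_add,
      gaussianCoeff_add hτ, smul_eq_mul]
    field_simp
    exact eq_comm
  exact ⟨fun h a ↦ (hcoeff a).mp (h ▸ rfl), fun h ↦ eq_of_fourierCoeff_eq fun a ↦
    (hcoeff a).mpr (h a)⟩

end Gaussian

section Residues

variable {κ : Type*} {N : ℕ}

/-- The coset `μ + Nℤ^κ`, the support of the Fourier coefficients of `θ_μ`. -/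
def latticeCoset (N : ℕ) (μ : κ → ℤ) : Set (κ → ℤ) :=
  Set.range fun n ↦ μ + N • n

theorem mem_latticeCoset_iff {μ a : κ → ℤ} :
    a ∈ latticeCoset N μ ↔ ∀ j, μ j ≡ a j [ZMOD N] := by
  simp only [latticeCoset, Set.mem_range, Int.modEq_iff_dvd]
  constructor
  · rintro ⟨n, rfl⟩ j
    exact ⟨n j, by simp⟩
  · intro h
    choose n hn using h
    exact ⟨n, funext fun j ↦ by simp [← hn j]⟩

theorem add_single_mem_latticeCoset_iff [DecidableEq κ] {μ a : κ → ℤ} {j : κ} :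
    a + Pi.single j (N : ℤ) ∈ latticeCoset N μ ↔ a ∈ latticeCoset N μ := by
  simp only [mem_latticeCoset_iff]
  refine forall_congr' fun k ↦ ?_
  obtain rfl | hk := eq_or_ne k j
  · simp [Int.ModEq]
  · simp [hk]

/-- The residue vector `m ∈ {0, …, N-1}^κ` as a vector of integers. -/
def residueVec (m : κ → Fin N) : κ → ℤ :=
  fun j ↦ ((m j : ℕ) : ℤ)

theorem exists_mem_latticeCoset_residueVec [NeZero N] (a : κ → ℤ) :
    ∃ m : κ → Fin N, a ∈ latticeCoset N (residueVec m) := by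
  have hN : 0 < (N : ℤ) := mod_cast NeZero.pos N
  have hmod (j : κ) : 0 ≤ a j % N ∧ a j % N < N :=
    ⟨Int.emod_nonneg _ hN.ne', Int.emod_lt_of_pos _ hN⟩
  refine ⟨fun j ↦ ⟨(a j % N).toNat, by grind⟩, mem_latticeCoset_iff.mpr fun j ↦ ?_⟩
  rw [residueVec, Int.toNat_of_nonneg (hmod j).1]
  exact Int.mod_modEq _ _

theorem mem_latticeCoset_residueVec_iff {m m' : κ → Fin N} {a : κ → ℤ}
    (ha : a ∈ latticeCoset N (residueVec m)) : a ∈ latticeCoset N (residueVec m') ↔ m' = m := by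
  refine ⟨fun ha' ↦ funext fun j ↦ Fin.ext ?_, fun h ↦ h ▸ ha⟩
  have h := (mem_latticeCoset_iff.mp ha' j).trans (mem_latticeCoset_iff.mp ha j).symm
  exact (Int.natCast_modEq_iff.mp h).eq_of_lt_of_lt (m' j).isLt (m j).isLt

end Residues

section ThetaSeries

open scoped Matrix
open entirePeriodic

variable {N : ℕ} {P : Matrix ι ι ℂ}

theorem inv_smul_mulVec_single [NeZero N] [DecidableEq ι] (j : ι) :
    ((N : ℂ)⁻¹ • P) *ᵥ (fun k ↦ ((Pi.single j (N : ℤ) : ι → ℤ) k : ℂ)) = fun k ↦ P k j := by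
  have hN : (N : ℂ) ≠ 0 := NeZero.ne _
  ext k
  rw [intCast_single]
  calc (((N : ℂ)⁻¹ • P) *ᵥ Pi.single j ((N : ℤ) : ℂ)) k = (N : ℂ)⁻¹ * P k j * N := by
        simp [Matrix.mulVec_single]
    _ = P k j := by field

/-- The linear functional `c(a) / exp(πi aᵀΠa / N)` of the Fourier coefficients `c`. On theta
functions it depends only on `a` modulo `N`, and it is dual to the family of theta series. -/
noncomputable def thetaCoeff (N : ℕ) (P : Matrix ι ι ℂ) (a : ι → ℤ) :
    entirePeriodic ι →ₗ[ℂ] ℂ :=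
  (gaussianCoeff ((N : ℂ)⁻¹ • P) a)⁻¹ • fourierCoeff a

theorem thetaCoeff_apply (a : ι → ℤ) (φ : entirePeriodic ι) :
    thetaCoeff N P a φ = fourierCoeff a φ / gaussianCoeff ((N : ℂ)⁻¹ • P) a :=
  inv_mul_eq_div _ _

theorem eq_of_thetaCoeff_eq {φ ψ : entirePeriodic ι}
    (h : ∀ a, thetaCoeff N P a φ = thetaCoeff N P a ψ) : φ = ψ :=
  eq_of_fourierCoeff_eq fun a ↦
    mul_left_cancel₀ (inv_ne_zero (gaussianCoeff_ne_zero ((N : ℂ)⁻¹ • P) a)) (h a)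

theorem superexpDecay_indicator_latticeCoset [NeZero N] (hP : (P.map Complex.im).PosDef)
    (μ : ι → ℤ) :
    SuperexpDecay ((latticeCoset N μ).indicator (gaussianCoeff ((N : ℂ)⁻¹ • P))) := by
  have him : ((N : ℂ)⁻¹ • P).map Complex.im = (N : ℝ)⁻¹ • P.map Complex.im := by
    ext j k
    simp [← Complex.ofReal_natCast, ← Complex.ofReal_inv]
  have hN : 0 < (N : ℝ)⁻¹ := by positivity [NeZero.pos N]
  exact (superexpDecay_gaussianCoeff (him ▸ hP.smul hN)).indicator _

/-- The theta series `θ_μ`, as the entire periodic function with Fourier coefficients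
`exp(πi aᵀΠa / N)` on the coset `μ + Nℤ^g`. -/
noncomputable def thetaSeries (N : ℕ) [NeZero N] (hP : (P.map Complex.im).PosDef) (μ : ι → ℤ) :
    entirePeriodic ι :=
  expSeries _ (superexpDecay_indicator_latticeCoset (N := N) hP μ)

theorem thetaCoeff_thetaSeries [NeZero N] (hP : (P.map Complex.im).PosDef) (μ a : ι → ℤ) :
    thetaCoeff N P a (thetaSeries N hP μ) = (latticeCoset N μ).indicator 1 a := by
  rw [thetaCoeff_apply, thetaSeries, fourierCoeff_expSeries]
  by_cases ha : a ∈ latticeCoset N μ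
  · rw [Set.indicator_of_mem ha, Set.indicator_of_mem ha, div_self (gaussianCoeff_ne_zero _ _),
      Pi.one_apply]
  · rw [Set.indicator_of_notMem ha, Set.indicator_of_notMem ha, zero_div]

theorem thetaCoeff_thetaSeries_residueVec [NeZero N] (hP : (P.map Complex.im).PosDef)
    {m : ι → Fin N} {a : ι → ℤ} (ha : a ∈ latticeCoset N (residueVec m))
    (m' : ι → Fin N) :
    thetaCoeff N P a (thetaSeries N hP (residueVec m')) = if m' = m then 1 else 0 := by
  classical
  simp only [thetaCoeff_thetaSeries, Set.indicator_apply, mem_latticeCoset_residueVec_iff ha,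
    Pi.one_apply]

end ThetaSeries

section ThetaSpace

open scoped Matrix
open entirePeriodic

variable {g N : ℕ} {P : Matrix (Fin g) (Fin g) ℂ}

theorem mem_entirePeriodic_of_mem_thetaSpace {f : (Fin g → ℂ) → ℂ} (hf : f ∈ thetaSpace g N P) :
    f ∈ entirePeriodic (Fin g) :=
  mem_of_periodic_single hf.1 fun j z ↦ hf.2.1 z j

theorem mem_thetaSpace_iff_translate [NeZero N] (φ : entirePeriodic (Fin g)) :
    φ.1 ∈ thetaSpace g N P ↔ ∀ j,
      translate (((N : ℂ)⁻¹ • P) *ᵥ fun k ↦ ((Pi.single j (N : ℤ) : Fin g → ℤ) k : ℂ)) φ =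
        (gaussianCoeff ((N : ℂ)⁻¹ • P) (Pi.single j N))⁻¹ • (character (-Pi.single j N) * φ) := by
  have hfactor (j : Fin g) (z : Fin g → ℂ) :
      Complex.exp (-(2 * Real.pi * Complex.I * N * z j) - Real.pi * Complex.I * N * P j j) =
        (gaussianCoeff ((N : ℂ)⁻¹ • P) (Pi.single j N))⁻¹ * (character (-Pi.single j N)).1 z := by
    rw [gaussianCoeff, inv_smul_mulVec_single, intCast_single, character_apply, ← Complex.exp_neg,
      ← Complex.exp_add, single_dotProduct,
      Finset.sum_eq_single j (by simp +contextual) (by simp), Pi.neg_apply, Pi.single_eq_same]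
    push_cast
    ring_nf
  simp only [inv_smul_mulVec_single, Subtype.ext_iff, funext_iff]
  constructor
  · intro h j z
    refine (h.2.2 z j).trans ?_
    rw [hfactor, mul_assoc]
    rfl
  · intro h
    refine ⟨φ.2.1, fun z j ↦ periodic_single φ j z, fun z j ↦ ?_⟩
    rw [hfactor, mul_assoc]
    exact h j z

theorem mem_thetaSpace_iff_periodic [NeZero N] (hP : P.IsSymm) (φ : entirePeriodic (Fin g)) :
    φ.1 ∈ thetaSpace g N P ↔
      ∀ j, Function.Periodic (fun a ↦ thetaCoeff N P a φ) (Pi.single j (N : ℤ)) := by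
  simp_rw [mem_thetaSpace_iff_translate, translate_eq_iff_periodic (hP.smul _), thetaCoeff_apply]

theorem thetaCoeff_eq_of_mem_latticeCoset [NeZero N] (hP : P.IsSymm) {φ : entirePeriodic (Fin g)}
    (hφ : φ.1 ∈ thetaSpace g N P) {μ a : Fin g → ℤ} (ha : a ∈ latticeCoset N μ) :
    thetaCoeff N P a φ = thetaCoeff N P μ φ := by
  obtain ⟨n, rfl⟩ := ha
  have hsingle (j : Fin g) : Function.Periodic (fun a ↦ thetaCoeff N P a φ)
      (DistribSMul.toAddMonoidHom (Fin g → ℤ) N (Pi.single j 1)) := by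
    rw [DistribSMul.toAddMonoidHom_apply, ← Pi.single_smul, nsmul_one]
    exact (mem_thetaSpace_iff_periodic hP φ).mp hφ j
  exact periodic_map_of_periodic_single _ hsingle n μ

theorem thetaTerm_eq_gaussianCoeff_mul [NeZero N] (μ n : Fin g → ℤ) (z : Fin g → ℂ) :
    thetaTerm g N P μ z n = gaussianCoeff ((N : ℂ)⁻¹ • P) (μ + N • n) *
      (character (μ + N • n)).1 z := by
  have hN : (N : ℂ) ≠ 0 := NeZero.ne _
  have hscale (j : Fin g) : (μ j : ℂ) / N + n j = (N : ℂ)⁻¹ * ((μ + N • n) j : ℤ) := by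
    rw [Pi.add_apply, Pi.smul_apply, nsmul_eq_mul]
    push_cast
    field
  simp only [thetaTerm, hscale, gaussianCoeff, character_apply, ← Complex.exp_add]
  rw [mul_add]
  congr 2
  · simp only [dotProduct, Matrix.mulVec, Finset.mul_sum, Matrix.smul_apply, smul_eq_mul]
    exact Finset.sum_congr rfl fun j _ ↦ Finset.sum_congr rfl fun k _ ↦ by field
  · simp only [Finset.mul_sum]
    exact Finset.sum_congr rfl fun j _ ↦ by field

theorem coe_thetaSeries [NeZero N] (hP : (P.map Complex.im).PosDef) (μ : Fin g → ℤ) :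
    (thetaSeries N hP μ).1 = theta g N P μ := by
  ext z
  symm
  have hinj : Function.Injective fun n : Fin g → ℤ ↦ μ + N • n :=
    (add_right_injective μ).comp (smul_right_injective _ (NeZero.ne N))
  calc theta g N P μ z = ∑' n : Fin g → ℤ, (fun a ↦ gaussianCoeff ((N : ℂ)⁻¹ • P) a *
        (character a).1 z) (μ + N • n) := tsum_congr (thetaTerm_eq_gaussianCoeff_mul μ · z)
    _ = ∑' a : latticeCoset N μ, gaussianCoeff ((N : ℂ)⁻¹ • P) a * (character a.1).1 z :=
        (tsum_range (fun a ↦ gaussianCoeff _ a * (character a).1 z) hinj).symm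
    _ = ∑' a, (latticeCoset N μ).indicator (gaussianCoeff ((N : ℂ)⁻¹ • P)) a *
        (character a).1 z := by
      rw [tsum_subtype (latticeCoset N μ) fun a ↦ gaussianCoeff _ a * (character a).1 z]
      exact tsum_congr fun a ↦ Set.indicator_mul_left _ _ _

theorem theta_mem_thetaSpace [NeZero N] (hsymm : P.IsSymm) (hpos : (P.map Complex.im).PosDef)
    (μ : Fin g → ℤ) : theta g N P μ ∈ thetaSpace g N P := by
  rw [← coe_thetaSeries hpos, mem_thetaSpace_iff_periodic hsymm]
  intro j a
  classical
  simp only [thetaCoeff_thetaSeries, Set.indicator_apply, add_single_mem_latticeCoset_iff,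
    Pi.one_apply]

theorem eq_sum_thetaCoeff_smul_thetaSeries [NeZero N] (hsymm : P.IsSymm)
    (hpos : (P.map Complex.im).PosDef) {φ : entirePeriodic (Fin g)}
    (hφ : φ.1 ∈ thetaSpace g N P) :
    φ = ∑ m : Fin g → Fin N,
      thetaCoeff N P (residueVec m) φ • thetaSeries N hpos (residueVec m) := by
  refine eq_of_thetaCoeff_eq (N := N) (P := P) fun a ↦ ?_
  obtain ⟨m, ha⟩ := exists_mem_latticeCoset_residueVec (N := N) a
  simp only [map_sum, map_smul, thetaCoeff_thetaSeries_residueVec hpos ha, smul_eq_mul, mul_ite,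
    mul_one, mul_zero, Finset.sum_ite_eq', Finset.mem_univ, if_true]
  exact thetaCoeff_eq_of_mem_latticeCoset hsymm hφ ha

theorem span_range_theta [NeZero N] (hsymm : P.IsSymm) (hpos : (P.map Complex.im).PosDef) :
    Submodule.span ℂ (Set.range fun m : Fin g → Fin N ↦ theta g N P (residueVec m)) =
      thetaSpace g N P := by
  refine le_antisymm (Submodule.span_le.mpr ?_) fun f hf ↦ ?_
  · rintro _ ⟨m, rfl⟩
    exact theta_mem_thetaSpace hsymm hpos _
  · have hsum := congrArg Subtype.val (eq_sum_thetaCoeff_smul_thetaSeries hsymm hpos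
      (φ := ⟨f, mem_entirePeriodic_of_mem_thetaSpace hf⟩) hf)
    simp only [AddSubmonoidClass.coe_finsetSum, SetLike.val_smul, coe_thetaSeries] at hsum
    rw [hsum]
    exact Submodule.sum_mem _ fun m _ ↦
      Submodule.smul_mem _ _ (Submodule.subset_span (Set.mem_range_self m))

theorem linearIndependent_theta [NeZero N] (hP : (P.map Complex.im).PosDef) :
    LinearIndependent ℂ fun m : Fin g → Fin N ↦ theta g N P (residueVec m) := by
  have hself (m : Fin g → Fin N) : residueVec m ∈ latticeCoset N (residueVec m) :=
    mem_latticeCoset_iff.mpr fun _ ↦ rfl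
  have h : LinearIndependent ℂ fun m : Fin g → Fin N ↦ thetaSeries N hP (residueVec m) :=
    .of_pairwise_dual_eq_zero_one _ (fun m ↦ thetaCoeff N P (residueVec m))
      (fun m m' hne ↦ by simp [thetaCoeff_thetaSeries_residueVec hP (hself m), hne.symm])
      fun m ↦ by simp [thetaCoeff_thetaSeries_residueVec hP (hself m)]
  simp only [← coe_thetaSeries hP]
  exact h.map' (entirePeriodic (Fin g)).val.toLinearMap
    (LinearMap.ker_eq_bot.mpr Subtype.val_injective)

end ThetaSpace

end ClassicalTheta

theorem theta_spans_general {g N : ℕ} (hN0 : 0 < N) {P : Matrix (Fin g) (Fin g) ℂ}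
    (hsym : P.IsSymm) (hpos : (P.map Complex.im).PosDef) :
    Submodule.span ℂ
        (Set.range fun m : Fin g → Fin N ↦ theta g N P (fun j ↦ ((m j : ℕ) : ℤ))) =
      thetaSpace g N P ∧
    Module.finrank ℂ (thetaSpace g N P) = N ^ g := by
  have : NeZero N := ⟨hN0.ne'⟩
  have hspan := ClassicalTheta.span_range_theta (N := N) hsym hpos
  refine ⟨hspan, ?_⟩
  rw [← hspan, finrank_span_eq_card (ClassicalTheta.linearIndependent_theta hpos)]
  simp

/-- Every classical theta function is a `ℂ`-linear combination of the theta series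
`θ_μ^Π`, `μ ∈ {0,…,N−1}^g`; consequently the space of classical theta functions has
complex dimension `N^g`. -/
theorem theta_spans (g N : ℕ) (hg : 1 ≤ g) (hN0 : 0 < N) (hN : Even N)
    (P : Matrix (Fin g) (Fin g) ℂ) (hsym : P.IsSymm)
    (hpos : (P.map Complex.im).PosDef) :
    (∀ f : (Fin g → ℂ) → ℂ, Differentiable ℂ f →
      (∀ (z : Fin g → ℂ) (j : Fin g), f (z + Pi.single j 1) = f z) →
      (∀ (z : Fin g → ℂ) (j : Fin g), f (z + fun k => P k j)
        = Complex.exp (-(2 * Real.pi * Complex.I * N * z j)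
            - Real.pi * Complex.I * N * P j j) * f z) →
      f ∈ Submodule.span ℂ
        (Set.range fun m : Fin g → Fin N => theta g N P (fun j => ((m j : ℕ) : ℤ)))) ∧
    Module.finrank ℂ (thetaSpace g N P) = N ^ g := by
  have h := theta_spans_general hN0 hsym hpos
  exact ⟨fun f hf hperiod hquasi ↦ h.1 ▸ ⟨hf, hperiod, hquasi⟩, h.2⟩
end
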